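/- Let k ≥ 2, t ≥ 2, s ≥ 0, and let M_2,...,M_t be arbitrary ordered k-uniform matchings (ordered k-uniform hypergraphs with pairwise disjoint edges). Then OR(G_s^k, M_2,...,M_t) ≤ OR(M_2,...,M_t)^s. -/

import Mathlib

/-- An ordered hypergraph with vertex set `{1, …, n}` (with its natural order)
and edges given as finite sets of vertices. -/
structure OrderedHypergraph where
  n : ℕ
  edges : Finset (Finset ℕ)

/-- An ordered hypergraph `G` is contained in an ordered hypergraph `H` if there is an
injective, order-preserving map from the vertices of `G` to the vertices of `H` such that
edges of `G` map to edges of `H`. -/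
def OrderedHypergraph.Contains (H G : OrderedHypergraph) : Prop :=
  ∃ f : ℕ → ℕ, StrictMono f ∧ (∀ v ∈ Finset.Icc 1 G.n, f v ∈ Finset.Icc 1 H.n) ∧
    ∀ A ∈ G.edges, A.image f ∈ H.edges

/-- The complete `k`-uniform ordered hypergraph `K_N^k` on the vertex set `{1, …, N}`. -/
def completeHG (k N : ℕ) : OrderedHypergraph :=
  ⟨N, Finset.powersetCard k (Finset.Icc 1 N)⟩

/-- The `i`-colored subgraph of `K_N^k` under the coloring `c`. -/
def coloredSubgraph (k N : ℕ) {t : ℕ} (c : Finset ℕ → Fin t) (i : Fin t) : OrderedHypergraph :=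
  ⟨N, (Finset.powersetCard k (Finset.Icc 1 N)).filter fun A => c A = i⟩

/-- The ordered Ramsey number `OR(G 0, …, G (t-1))` of `k`-uniform ordered hypergraphs:
the minimum `N` such that every `t`-coloring of the edges of `K_N^k` contains, for some
color `i`, a copy of `G i` in the `i`-colored subgraph. -/
noncomputable def ORnum (k : ℕ) {t : ℕ} (G : Fin t → OrderedHypergraph) : ℕ :=
  sInf {N | ∀ c : Finset ℕ → Fin t, ∃ i, (coloredSubgraph k N c i).Contains (G i)}

/-- The `(k,ℓ)`-path `P_e^{k,ℓ}` with `e` edges: the ordered `k`-uniform hypergraph on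
vertex set `{1, …, e(k-ℓ)+ℓ}` with edges `A_r = {(r-1)(k-ℓ)+1, …, (r-1)(k-ℓ)+k}`. -/
def loosePath (k l e : ℕ) : OrderedHypergraph :=
  ⟨e * (k - l) + l,
    (Finset.range e).image fun r => Finset.Icc (r * (k - l) + 1) (r * (k - l) + k)⟩


/-- The ordered `k`-uniform hypergraph `G_s^k`, defined iteratively: `G_0^k` is a single
vertex with no edges, and `G_{s+1}^k` (on vertex set `{1, …, k^{s+1}}`) consists of `k`
disjoint consecutive copies of `G_s^k` (copy `j` occupying `{j·k^s + 1, …, (j+1)·k^s}`)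
together with every `k`-element edge having exactly one vertex in each copy. -/
def iterGraph (k : ℕ) : ℕ → OrderedHypergraph
  | 0 => ⟨1, ∅⟩
  | s + 1 =>
      ⟨k ^ (s + 1),
        ((Finset.range k).biUnion fun j =>
            (iterGraph k s).edges.image fun A => A.image fun x => x + j * k ^ s) ∪
          (Finset.powersetCard k (Finset.Icc 1 (k ^ (s + 1)))).filter fun A =>
            ∀ j ∈ Finset.range k,
              (A ∩ Finset.Icc (j * k ^ s + 1) ((j + 1) * k ^ s)).card = 1⟩

/-- `M` is an ordered `k`-uniform matching: each edge is a `k`-element subset of the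
vertex set `{1, …, M.n}`, and the edges are pairwise disjoint. -/
def IsOrderedMatching (k : ℕ) (M : OrderedHypergraph) : Prop :=
  (∀ A ∈ M.edges, A.card = k ∧ A ⊆ Finset.Icc 1 M.n) ∧
    ∀ A ∈ M.edges, ∀ B ∈ M.edges, A ≠ B → Disjoint A B

/-- Relaxed containment: the embedding only needs to be monotone on the vertex set. -/
def GoodEmb {t : ℕ} (N : ℕ) (c : Finset ℕ → Fin t) (i : Fin t) (G : OrderedHypergraph) : Prop :=
  ∃ f : ℕ → ℕ, (∀ x y, 1 ≤ x → x < y → y ≤ G.n → f x < f y) ∧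
    (∀ v, 1 ≤ v → v ≤ G.n → 1 ≤ f v ∧ f v ≤ N) ∧
    ∀ A ∈ G.edges, c (A.image f) = i

def IsUnif (k : ℕ) (G : OrderedHypergraph) : Prop :=
  ∀ A ∈ G.edges, A.card = k ∧ A ⊆ Finset.Icc 1 G.n

lemma goodEmb_of_contains {k N t : ℕ} {c : Finset ℕ → Fin t} {i : Fin t} {G : OrderedHypergraph}
    (h : (coloredSubgraph k N c i).Contains G) : GoodEmb N c i G := by
  obtain ⟨f, hf, hv, he⟩ := h
  refine ⟨f, fun x y _ hxy _ => hf hxy, fun v h1 h2 => ?_, fun A hA => ?_⟩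
  · have := hv v (Finset.mem_Icc.2 ⟨h1, h2⟩)
    exact Finset.mem_Icc.1 this
  · have := he A hA
    exact (Finset.mem_filter.1 this).2

lemma image_mem_powersetCard {k N n : ℕ} {f : ℕ → ℕ} {A : Finset ℕ}
    (hf : ∀ x y, 1 ≤ x → x < y → y ≤ n → f x < f y)
    (hv : ∀ v, 1 ≤ v → v ≤ n → 1 ≤ f v ∧ f v ≤ N)
    (hA : A.card = k ∧ A ⊆ Finset.Icc 1 n) :
    A.image f ∈ Finset.powersetCard k (Finset.Icc 1 N) := by
  rw [Finset.mem_powersetCard]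
  constructor
  · intro y hy
    obtain ⟨x, hx, rfl⟩ := Finset.mem_image.1 hy
    have := Finset.mem_Icc.1 (hA.2 hx)
    exact Finset.mem_Icc.2 (hv x this.1 this.2)
  · rw [Finset.card_image_of_injOn, hA.1]
    intro x hx y hy hxy
    have h1 := Finset.mem_Icc.1 (hA.2 hx)
    have h2 := Finset.mem_Icc.1 (hA.2 hy)
    rcases lt_trichotomy x y with h | h | h
    · have := hf x y h1.1 h h2.2
      omega
    · exact h
    · have := hf y x h2.1 h h1.2
      omega

lemma contains_of_goodEmb {k N t : ℕ} {c : Finset ℕ → Fin t} {i : Fin t} {G : OrderedHypergraph}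
    (hG : IsUnif k G) (h : GoodEmb N c i G) : (coloredSubgraph k N c i).Contains G := by
  obtain ⟨f, hf, hv, he⟩ := h
  refine ⟨fun v => if v = 0 then 0 else if v ≤ G.n then f v else N + v, ?_, ?_, ?_⟩
  · intro x y hxy
    dsimp only
    have h1 := hv x
    have h2 := hv y
    have h3 := hf x y
    split_ifs <;> omega
  · intro v hv'
    have h3 := Finset.mem_Icc.1 hv'
    have h1 := hv v h3.1 h3.2
    have h4 : v ≠ 0 := by omega
    simp only [h4, if_false, h3.2, if_true]
    exact Finset.mem_Icc.2 h1
  · intro A hA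
    have himg : (A.image fun v => if v = 0 then 0 else if v ≤ G.n then f v else N + v)
        = A.image f := by
      apply Finset.image_congr
      intro v hv'
      have h3 := Finset.mem_Icc.1 ((hG A hA).2 hv')
      have h4 : v ≠ 0 := by omega
      simp only [h4, if_false, h3.2, if_true]
    rw [himg]
    exact Finset.mem_filter.2 ⟨image_mem_powersetCard hf hv (hG A hA), he A hA⟩

lemma iterGraph_n (k s : ℕ) : (iterGraph k s).n = k ^ s := by
  cases s <;> simp [iterGraph]

lemma iterGraph_unif (k s : ℕ) : IsUnif k (iterGraph k s) := by
  induction s with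
  | zero => intro A hA; simp [iterGraph] at hA
  | succ s ih =>
    intro A hA
    rw [iterGraph_n]
    simp only [iterGraph, Finset.mem_union, Finset.mem_biUnion, Finset.mem_image,
      Finset.mem_filter, Finset.mem_range] at hA
    rcases hA with ⟨j, hj, A', hA', rfl⟩ | ⟨h, -⟩
    · have := ih A' hA'
      rw [iterGraph_n] at this
      constructor
      · rw [Finset.card_image_of_injective _ (add_left_injective _), this.1]
      · intro y hy
        obtain ⟨x, hx, rfl⟩ := Finset.mem_image.1 hy
        have h1 := Finset.mem_Icc.1 (this.2 hx)
        have h2 : (j + 1) * k ^ s ≤ k * k ^ s := Nat.mul_le_mul_right _ hj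
        rw [Finset.mem_Icc, pow_succ']
        constructor
        · omega
        · rw [add_mul] at h2; omega
    · exact (Finset.mem_powersetCard.1 h).symm

lemma caseA {k s R N t : ℕ} {c : Finset ℕ → Fin t} {i : Fin t} (h : ℕ → ℕ → ℕ)
    (hk : 2 ≤ k)
    (hmono : ∀ b, 1 ≤ b → b ≤ R → ∀ x y, 1 ≤ x → x < y → y ≤ k ^ s → h b x < h b y)
    (hlt : ∀ b b', 1 ≤ b → b < b' → b' ≤ R → ∀ x y, 1 ≤ x → x ≤ k ^ s → 1 ≤ y → y ≤ k ^ s →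
      h b x < h b' y)
    (hN : ∀ b, 1 ≤ b → b ≤ R → ∀ x, 1 ≤ x → x ≤ k ^ s → 1 ≤ h b x ∧ h b x ≤ N)
    (hedge : ∀ b, 1 ≤ b → b ≤ R → ∀ A ∈ (iterGraph k s).edges, c (A.image (h b)) = i)
    (B : Finset ℕ) (hB : B ∈ Finset.powersetCard k (Finset.Icc 1 R))
    (hw : ∀ w : ℕ → ℕ, (∀ b, 1 ≤ w b ∧ w b ≤ k ^ s) → c (B.image fun b => h b (w b)) = i) :
    GoodEmb N c i (iterGraph k (s + 1)) := by
  obtain ⟨hBs, hBc⟩ := Finset.mem_powersetCard.1 hB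
  have hK : 0 < k ^ s := by positivity
  obtain ⟨e, he1, he2, he3⟩ : ∃ e : ℕ → ℕ, (∀ x y, x < y → y < k → e x < e y) ∧
      (∀ x, x < k → e x ∈ B) ∧ ∀ b ∈ B, ∃ x, x < k ∧ e x = b := by
    refine ⟨fun x => if hx : x < k then B.orderEmbOfFin hBc ⟨x, hx⟩ else 0, ?_, ?_, ?_⟩
    · intro x y hxy hy
      simp [hy, hxy.trans hy, hxy]
    · intro x hx
      simp [hx]
    · intro b hb
      have : b ∈ Set.range (B.orderEmbOfFin hBc) := by simpa using hb
      obtain ⟨x, hx⟩ := this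
      exact ⟨x, x.2, by simp [hx]⟩
  have heR : ∀ x, x < k → 1 ≤ e x ∧ e x ≤ R := fun x hx => Finset.mem_Icc.1 (hBs (he2 x hx))
  have heinj : ∀ x y, x < k → y < k → e x = e y → x = y := by
    intro x y hx hy hxy
    rcases lt_trichotomy x y with h | h | h
    · have := he1 x y h hy
      omega
    · exact h
    · have := he1 y x h hx
      omega
  set K := k ^ s with hKdef
  have hdiv : ∀ v, 1 ≤ v → v ≤ k * K → (v - 1) / K < k := by
    intro v h1 h2
    rw [Nat.div_lt_iff_lt_mul hK]
    omega
  have hmod : ∀ v, 1 ≤ (v - 1) % K + 1 ∧ (v - 1) % K + 1 ≤ K := by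
    intro v
    have := Nat.mod_lt (v - 1) hK
    omega
  refine ⟨fun v => h (e ((v - 1) / K)) ((v - 1) % K + 1), ?_, ?_, ?_⟩
  · intro x y hx hxy hy
    rw [iterGraph_n, pow_succ', ← hKdef] at hy
    have hdx := hdiv x hx (by omega)
    have hdy := hdiv y (by omega) hy
    have hle : (x - 1) / K ≤ (y - 1) / K := Nat.div_le_div_right (by omega)
    rcases hle.lt_or_eq with hl | hl
    · exact hlt _ _ (heR _ hdx).1 (he1 _ _ hl hdy) (heR _ hdy).2 _ _ (hmod x).1 (hmod x).2
        (hmod y).1 (hmod y).2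
    · dsimp only
      rw [← hl]
      refine hmono _ (heR _ hdx).1 (heR _ hdx).2 _ _ (hmod x).1 ?_ (hmod y).2
      have h1 := Nat.div_add_mod (x - 1) K
      have h2 := Nat.div_add_mod (y - 1) K
      rw [← hl] at h2
      omega
  · intro v h1 h2
    rw [iterGraph_n, pow_succ', ← hKdef] at h2
    have hd := hdiv v h1 h2
    exact hN _ (heR _ hd).1 (heR _ hd).2 _ (hmod v).1 (hmod v).2
  · intro A hA
    simp only [iterGraph, Finset.mem_union, Finset.mem_biUnion, Finset.mem_image,
      Finset.mem_filter, Finset.mem_range] at hA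
    rcases hA with ⟨j, hj, A', hA', rfl⟩ | ⟨hA, hA1⟩
    · rw [Finset.image_image, ← hedge (e j) (heR j hj).1 (heR j hj).2 A' hA']
      congr 1
      apply Finset.image_congr
      intro x hx
      have h3 := Finset.mem_Icc.1 ((iterGraph_unif k s A' hA').2 hx)
      rw [iterGraph_n] at h3
      have h4 : x + j * K - 1 = (x - 1) + j * K := by omega
      have h5 : x - 1 < K := by omega
      simp only [Function.comp, ← hKdef, h4, Nat.add_mul_div_right _ _ hK,
        Nat.add_mul_mod_self_right, Nat.div_eq_of_lt h5, Nat.mod_eq_of_lt h5]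
      congr 1
      · simp
      · omega
    · obtain ⟨hAs, hAc⟩ := Finset.mem_powersetCard.1 hA
      rw [pow_succ', ← hKdef] at hAs
      have hblk : ∀ x j, 1 ≤ x → ((x - 1) / K = j ↔ x ∈ Finset.Icc (j * K + 1) ((j + 1) * K)) := by
        intro x j hx
        rw [Finset.mem_Icc, Nat.div_eq_iff hK, add_mul]
        omega
      have hex : ∀ b, ∃ x, b ∈ B → x ∈ A ∧ e ((x - 1) / K) = b := by
        intro b
        by_cases hb : b ∈ B
        · obtain ⟨j, hj, rfl⟩ := he3 b hb
          obtain ⟨x, hx⟩ := Finset.card_eq_one.1 (hA1 j hj)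
          have hx' : x ∈ A ∩ Finset.Icc (j * k ^ s + 1) ((j + 1) * k ^ s) := by
            rw [hx]; simp
          rw [Finset.mem_inter] at hx'
          have := (hblk x j (Finset.mem_Icc.1 (hAs hx'.1)).1).2 hx'.2
          exact ⟨x, fun _ => ⟨hx'.1, by rw [this]⟩⟩
        · exact ⟨0, fun h => absurd h hb⟩
      choose a ha using hex
      have huniq : ∀ x ∈ A, a (e ((x - 1) / K)) = x := by
        intro x hx
        have hxI := Finset.mem_Icc.1 (hAs hx)
        have hd := hdiv x hxI.1 hxI.2
        obtain ⟨h1, h2⟩ := ha (e ((x - 1) / K)) (he2 _ hd)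
        have hyI := Finset.mem_Icc.1 (hAs h1)
        have h3 := heinj _ _ (hdiv _ hyI.1 hyI.2) hd h2
        have h4 := (hblk _ _ hyI.1).1 h3
        have h5 := (hblk _ _ hxI.1).1 rfl
        exact Finset.card_le_one.1 (hA1 _ hd).le _ (Finset.mem_inter.2 ⟨h1, h4⟩) _
          (Finset.mem_inter.2 ⟨hx, h5⟩)
      rw [← hw (fun b => (a b - 1) % K + 1) (fun b => hmod _)]
      congr 1
      ext y
      simp only [Finset.mem_image]
      constructor
      · rintro ⟨x, hx, rfl⟩
        have hxI := Finset.mem_Icc.1 (hAs hx)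
        refine ⟨e ((x - 1) / K), he2 _ (hdiv x hxI.1 hxI.2), ?_⟩
        rw [huniq x hx]
      · rintro ⟨b, hb, rfl⟩
        refine ⟨a b, (ha b hb).1, ?_⟩
        rw [(ha b hb).2]

lemma caseB {k K R N u : ℕ} {c : Finset ℕ → Fin (u + 1)} (h : ℕ → ℕ → ℕ)
    (hu : 1 ≤ u) (hK : 1 ≤ K)
    (M : Fin u → OrderedHypergraph) (hM : ∀ i, IsOrderedMatching k (M i))
    (hR : ∀ c : Finset ℕ → Fin u, ∃ i, GoodEmb R c i (M i))
    (hlt : ∀ b b', 1 ≤ b → b < b' → b' ≤ R → ∀ x y, 1 ≤ x → x ≤ K → 1 ≤ y → y ≤ K →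
      h b x < h b' y)
    (hN : ∀ b, 1 ≤ b → b ≤ R → ∀ x, 1 ≤ x → x ≤ K → 1 ≤ h b x ∧ h b x ≤ N)
    (hw : ∀ B ∈ Finset.powersetCard k (Finset.Icc 1 R),
      ∃ w : ℕ → ℕ, (∀ b, 1 ≤ w b ∧ w b ≤ K) ∧ c (B.image fun b => h b (w b)) ≠ 0) :
    ∃ i : Fin u, GoodEmb N c i.succ (M i) := by
  classical
  have hex : ∀ B : Finset ℕ, ∃ (w : ℕ → ℕ) (i : Fin u), (∀ b, 1 ≤ w b ∧ w b ≤ K) ∧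
      (B ∈ Finset.powersetCard k (Finset.Icc 1 R) → c (B.image fun b => h b (w b)) = i.succ) := by
    intro B
    by_cases hB : B ∈ Finset.powersetCard k (Finset.Icc 1 R)
    · obtain ⟨w, h1, h2⟩ := hw B hB
      obtain ⟨i, hi⟩ := Fin.exists_succ_eq.2 h2
      exact ⟨w, i, h1, fun _ => hi.symm⟩
    · exact ⟨fun _ => 1, ⟨0, hu⟩, fun _ => ⟨le_rfl, hK⟩, fun h => absurd h hB⟩
  choose w c' hw1 hw2 using hex
  obtain ⟨i, φ, hφ, hφv, hφe⟩ := hR c'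
  obtain ⟨hMu, hMd⟩ := hM i
  have hE : ∀ v, ∃ E : Finset ℕ, ∀ A ∈ (M i).edges, v ∈ A → E = A := by
    intro v
    by_cases hv : ∃ A ∈ (M i).edges, v ∈ A
    · obtain ⟨A, hA, hvA⟩ := hv
      refine ⟨A, fun B hB hvB => ?_⟩
      by_contra hne
      exact Finset.disjoint_left.1 (hMd A hA B hB hne) hvA hvB
    · exact ⟨∅, fun A hA hvA => absurd ⟨A, hA, hvA⟩ hv⟩
  choose E hE using hE
  refine ⟨i, fun v => h (φ v) (w ((E v).image φ) (φ v)), ?_, ?_, ?_⟩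
  · intro x y hx hxy hy
    exact hlt _ _ (hφv x hx (by omega)).1 (hφ x y hx hxy hy) (hφv y (by omega) hy).2 _ _
      (hw1 _ _).1 (hw1 _ _).2 (hw1 _ _).1 (hw1 _ _).2
  · intro v h1 h2
    exact hN _ (hφv v h1 h2).1 (hφv v h1 h2).2 _ (hw1 _ _).1 (hw1 _ _).2
  · intro A hA
    have := hw2 (A.image φ) (image_mem_powersetCard hφ hφv (hMu A hA))
    rw [hφe A hA, Finset.image_image] at this
    rw [← this]
    congr 1
    apply Finset.image_congr
    intro v hv
    simp only [Function.comp]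
    rw [hE v A hA hv]

lemma main_step {k u R : ℕ} (hk : 2 ≤ k) (hu : 1 ≤ u)
    (M : Fin u → OrderedHypergraph) (hM : ∀ i, IsOrderedMatching k (M i))
    (hR : ∀ c : Finset ℕ → Fin u, ∃ i, GoodEmb R c i (M i)) (s : ℕ) :
    ∀ c : Finset ℕ → Fin (u + 1), GoodEmb (R ^ s) c 0 (iterGraph k s) ∨
      ∃ i : Fin u, GoodEmb (R ^ s) c i.succ (M i) := by
  induction s with
  | zero =>
    intro c
    left
    refine ⟨id, fun x y _ h _ => h, fun v h1 h2 => ?_, fun A hA => ?_⟩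
    · rw [iterGraph_n] at h2
      simpa using ⟨h1, h2⟩
    · simp [iterGraph] at hA
  | succ s ih =>
    intro c
    rw [or_iff_not_imp_right]
    intro hno
    set P := R ^ s with hP
    have hpow : R ^ (s + 1) = R * P := pow_succ' R s
    have hbP : ∀ b, 1 ≤ b → b ≤ R → (b - 1) * P + P ≤ R * P := by
      intro b h1 h2
      have h3 : (b - 1 + 1) * P ≤ R * P := Nat.mul_le_mul_right _ (by omega)
      rwa [add_mul, one_mul] at h3
    have hgood : ∀ b, ∃ g : ℕ → ℕ, 1 ≤ b → b ≤ R →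
        (∀ x y, 1 ≤ x → x < y → y ≤ k ^ s → g x < g y) ∧
        (∀ v, 1 ≤ v → v ≤ k ^ s → 1 ≤ g v ∧ g v ≤ P) ∧
        ∀ A ∈ (iterGraph k s).edges, c ((A.image g).image fun x => x + (b - 1) * P) = 0 := by
      intro b
      by_cases hb : 1 ≤ b ∧ b ≤ R
      · rcases ih (fun A => c (A.image fun x => x + (b - 1) * P)) with h | ⟨i, f, hf, hv, he⟩
        · obtain ⟨g, h1, h2, h3⟩ := h
          rw [iterGraph_n] at h1 h2
          exact ⟨g, fun _ _ => ⟨h1, h2, h3⟩⟩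
        · exfalso
          apply hno
          refine ⟨i, fun x => f x + (b - 1) * P, ?_, ?_, ?_⟩
          · intro x y h1 h2 h3
            have := hf x y h1 h2 h3
            dsimp only
            omega
          · intro v h1 h2
            have := hv v h1 h2
            have := hbP b hb.1 hb.2
            rw [hpow]
            dsimp only
            omega
          · intro A hA
            have := he A hA
            dsimp only at this
            rw [Finset.image_image] at this
            exact this
      · exact ⟨id, fun h1 h2 => absurd ⟨h1, h2⟩ hb⟩
    choose g hg using hgood
    have hlt : ∀ b b', 1 ≤ b → b < b' → b' ≤ R → ∀ x y, 1 ≤ x → x ≤ k ^ s → 1 ≤ y → y ≤ k ^ s →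
        g b x + (b - 1) * P < g b' y + (b' - 1) * P := by
      intro b b' h1 h2 h3 x y hx hx' hy hy'
      have h4 := (hg b h1 (by omega)).2.1 x hx hx'
      have h5 := (hg b' (by omega) h3).2.1 y hy hy'
      have h6 : (b - 1 + 1) * P ≤ (b' - 1) * P := Nat.mul_le_mul_right _ (by omega)
      rw [add_mul, one_mul] at h6
      omega
    have hN : ∀ b, 1 ≤ b → b ≤ R → ∀ x, 1 ≤ x → x ≤ k ^ s →
        1 ≤ g b x + (b - 1) * P ∧ g b x + (b - 1) * P ≤ R * P := by
      intro b h1 h2 x hx hx'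
      have h4 := (hg b h1 h2).2.1 x hx hx'
      have := hbP b h1 h2
      omega
    by_cases hw : ∃ B ∈ Finset.powersetCard k (Finset.Icc 1 R), ∀ w : ℕ → ℕ,
        (∀ b, 1 ≤ w b ∧ w b ≤ k ^ s) → c (B.image fun b => g b (w b) + (b - 1) * P) = 0
    · obtain ⟨B, hB, hw⟩ := hw
      rw [hpow]
      refine caseA (R := R) (fun b x => g b x + (b - 1) * P) hk ?_ hlt hN ?_ B hB hw
      · intro b h1 h2 x y hx hxy hy
        have := (hg b h1 h2).1 x y hx hxy hy
        omega
      · intro b h1 h2 A hA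
        have := (hg b h1 h2).2.2 A hA
        rw [Finset.image_image] at this
        exact this
    · exfalso
      apply hno
      rw [hpow]
      push Not at hw
      exact caseB (fun b x => g b x + (b - 1) * P) hu (Nat.one_le_pow _ _ (by omega)) M hM hR hlt hN hw

lemma iterGraph_edge {k s : ℕ} (hk : 2 ≤ k) : ((iterGraph k (s + 1)).edges).Nonempty := by
  induction s with
  | zero =>
    refine ⟨Finset.Icc 1 k, ?_⟩
    simp only [iterGraph, Finset.mem_union, Finset.mem_filter, Finset.mem_powersetCard]
    right
    refine ⟨⟨by simp, by simp⟩, fun j hj => ?_⟩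
    rw [Finset.mem_range] at hj
    rw [Finset.card_eq_one]
    refine ⟨j + 1, ?_⟩
    ext x
    simp only [Finset.mem_inter, Finset.mem_Icc, Finset.mem_singleton, pow_zero, mul_one]
    omega
  | succ s ih =>
    obtain ⟨A, hA⟩ := ih
    refine ⟨A.image fun x => x + 0 * k ^ (s + 1), ?_⟩
    rw [iterGraph]
    refine Finset.mem_union_left _ (Finset.mem_biUnion.2 ⟨0, Finset.mem_range.2 (by omega), ?_⟩)
    exact Finset.mem_image_of_mem _ hA

/-- For `k ≥ 2`, `s ≥ 0`, `t = u+1 ≥ 2`, and arbitrary ordered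
`k`-uniform matchings `M_2, …, M_t`,
`OR(G_s^k, M_2, …, M_t) ≤ OR(M_2, …, M_t)^s`. -/
theorem ordered_ramsey_iterGraph_matchings (k s u : ℕ) (hk : 2 ≤ k) (hu : 1 ≤ u)
    (M : Fin u → OrderedHypergraph) (hM : ∀ i, IsOrderedMatching k (M i)) :
    ORnum k (Fin.cons (iterGraph k s) M) ≤ (ORnum k M) ^ s := by
  by_cases hne : {N | ∀ c : Finset ℕ → Fin u, ∃ i, (coloredSubgraph k N c i).Contains (M i)}.Nonempty
  · have hmem := Nat.sInf_mem hne
    apply Nat.sInf_le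
    intro c
    have hR : ∀ c : Finset ℕ → Fin u, ∃ i, GoodEmb (ORnum k M) c i (M i) := fun c => by
      obtain ⟨i, hi⟩ := hmem c
      exact ⟨i, goodEmb_of_contains hi⟩
    rcases main_step hk hu M hM hR s c with h | ⟨i, h⟩
    · exact ⟨0, contains_of_goodEmb (iterGraph_unif k s) h⟩
    · exact ⟨i.succ, contains_of_goodEmb (hM i).1 h⟩
  · cases s with
    | zero =>
      apply Nat.sInf_le
      intro c
      refine ⟨0, id, strictMono_id, ?_, ?_⟩
      · intro v hv
        simpa [iterGraph, coloredSubgraph] using hv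
      · intro A hA
        simp [iterGraph] at hA
    | succ s =>
      have hempty : {N | ∀ c : Finset ℕ → Fin (u + 1), ∃ i, (coloredSubgraph k N c i).Contains
          ((Fin.cons (iterGraph k (s + 1)) M : Fin (u + 1) → OrderedHypergraph) i)} = ∅ := by
        by_contra hcon
        obtain ⟨N, hN⟩ := Set.nonempty_iff_ne_empty.2 hcon
        apply hne
        refine ⟨N, fun c => ?_⟩
        obtain ⟨i, hi⟩ := hN (fun A => (c A).succ)
        induction i using Fin.cases with
        | zero =>
          obtain ⟨f, -, -, he⟩ := goodEmb_of_contains hi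
          obtain ⟨A, hA⟩ := iterGraph_edge (s := s) hk
          exact absurd (he A hA) (Fin.succ_ne_zero _)
        | succ i =>
          refine ⟨i, contains_of_goodEmb (hM i).1 ?_⟩
          obtain ⟨f, h1, h2, h3⟩ := goodEmb_of_contains hi
          exact ⟨f, h1, h2, fun A hA => Fin.succ_injective _ (h3 A hA)⟩
      have : ORnum k (Fin.cons (iterGraph k (s + 1)) M : Fin (u + 1) → OrderedHypergraph) = 0 := by
        unfold ORnum
        rw [hempty]
        simp
      rw [this]
      exact Nat.zero_le _
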